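/- arXiv:2303.14987 — 2 statements merged into one kernel-verified Lean document; each statement's English description precedes it below -/
import Mathlib

section
/- Let G^i be a spray with coefficients N^i_j and let f : Ω → ℝ be smooth. Define ω_i = S(∂f/∂y^i) − ∂f/∂x^i. Then for all i, j on Ω: ∂ω_i/∂y^j = ∇(∂²f/∂y^j∂y^i) + δ/δx^j(∂f/∂y^i) − δ/δx^i(∂f/∂y^j), where ∇ is the dynamical covariant derivative applied to the family T_{ij} = ∂²f/∂y^i∂y^j. -/
noncomputable section

/-- A point `(x, y)` of the tangent space coordinates over `ℝⁿ`. -/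
abbrev Pt (n : ℕ) : Type := (Fin n → ℝ) × (Fin n → ℝ)

/-- `Ω = U × (ℝⁿ \ {0})`. -/
def OmegaSet {n : ℕ} (U : Set (Fin n → ℝ)) : Set (Pt n) :=
  {p : Pt n | p.1 ∈ U ∧ p.2 ≠ 0}

/-- Partial derivative `∂f/∂x^i`. -/
def pdx {n : ℕ} (f : Pt n → ℝ) (i : Fin n) (p : Pt n) : ℝ :=
  fderiv ℝ f p (Pi.single i 1, 0)

/-- Partial derivative `∂f/∂y^i`. -/
def pdy {n : ℕ} (f : Pt n → ℝ) (i : Fin n) (p : Pt n) : ℝ :=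
  fderiv ℝ f p (0, Pi.single i 1)

/-- Second fibre derivative `∂²f/∂y^i∂y^j`. -/
def pdyy {n : ℕ} (f : Pt n → ℝ) (i j : Fin n) : Pt n → ℝ :=
  pdy (pdy f j) i

/-- The spray vector field applied to a function:
`S(f) = Σ_k (y^k ∂f/∂x^k − 2 G^k ∂f/∂y^k)`. -/
def Sop {n : ℕ} (G : Fin n → Pt n → ℝ) (f : Pt n → ℝ) (p : Pt n) : ℝ :=
  ∑ k, (p.2 k * pdx f k p - 2 * G k p * pdy f k p)

/-- Connection coefficients `N^i_j = ∂G^i/∂y^j`. -/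
def Ncoef {n : ℕ} (G : Fin n → Pt n → ℝ) (i j : Fin n) : Pt n → ℝ :=
  pdy (G i) j

/-- Horizontal derivative `δf/δx^i = ∂f/∂x^i − Σ_j N^j_i ∂f/∂y^j`. -/
def deltax {n : ℕ} (G : Fin n → Pt n → ℝ) (f : Pt n → ℝ) (i : Fin n) (p : Pt n) : ℝ :=
  pdx f i p - ∑ j, Ncoef G j i p * pdy f j p

/-- Dynamical covariant derivative of a `(0,2)` family:
`∇T_{ij} = S(T_{ij}) − Σ_k (N^k_i T_{kj} + N^k_j T_{ik})`. -/
def nablaT {n : ℕ} (G : Fin n → Pt n → ℝ) (T : Fin n → Fin n → Pt n → ℝ)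
    (i j : Fin n) (p : Pt n) : ℝ :=
  Sop G (T i j) p - ∑ k, (Ncoef G k i p * T k j p + Ncoef G k j p * T i k p)

/-- `f` is positively `k`-homogeneous in the fibre variable `y`, on `Ω`. -/
def PosHomog {n : ℕ} (U : Set (Fin n → ℝ)) (k : ℤ) (f : Pt n → ℝ) : Prop :=
  ∀ L : ℝ, 0 < L → ∀ p ∈ OmegaSet U, f (p.1, L • p.2) = L ^ k * f p

/-- A spray: smooth, positively 2-homogeneous coefficients `G^i`. -/
def IsSpray {n : ℕ} (U : Set (Fin n → ℝ)) (G : Fin n → Pt n → ℝ) : Prop :=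
  ∀ i, ContDiffOn ℝ (⊤ : ℕ∞) (G i) (OmegaSet U) ∧ PosHomog U 2 (G i)

/-- Components of the Euler-Lagrange 1-form: `(δ_S f)_i = S(∂f/∂y^i) − ∂f/∂x^i`. -/
def EL {n : ℕ} (G : Fin n → Pt n → ℝ) (f : Pt n → ℝ) (i : Fin n) (p : Pt n) : ℝ :=
  Sop G (pdy f i) p - pdx f i p

/-- The metric tensor `g_{ij} = ½ ∂²(F²)/∂y^i∂y^j` of a Finsler function. -/
def metricTensor {n : ℕ} (F : Pt n → ℝ) (i j : Fin n) (p : Pt n) : ℝ :=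
  (1 / 2) * pdyy (fun q => F q ^ 2) i j p

/-- A Finsler structure on `U`: smooth, positive, positively 1-homogeneous,
with invertible metric tensor at every point of `Ω`. -/
def IsFinsler {n : ℕ} (U : Set (Fin n → ℝ)) (F : Pt n → ℝ) : Prop :=
  ContDiffOn ℝ (⊤ : ℕ∞) F (OmegaSet U) ∧ (∀ p ∈ OmegaSet U, 0 < F p) ∧ PosHomog U 1 F ∧
    ∀ p ∈ OmegaSet U, IsUnit (Matrix.of (fun i j => metricTensor F i j p))

lemma aux_open {n : ℕ} {U : Set (Fin n → ℝ)} (hU : IsOpen U) : IsOpen (OmegaSet U) := by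
  have h1 : IsOpen {p : Pt n | p.1 ∈ U} := hU.preimage continuous_fst
  have h2 : IsOpen {p : Pt n | p.2 ≠ 0} := isOpen_ne_fun continuous_snd continuous_const
  exact h1.inter h2

lemma aux_smooth {n : ℕ} {f : Pt n → ℝ} {p : Pt n} (hf : ContDiffAt ℝ (⊤ : ℕ∞) f p) (v : Pt n) :
    ContDiffAt ℝ (⊤ : ℕ∞) (fun q => fderiv ℝ f q v) p :=
  (hf.fderiv_right (m := (⊤ : ℕ∞)) (by simp)).clm_apply contDiffAt_const

lemma aux_diff {n : ℕ} {f : Pt n → ℝ} {p : Pt n} (hf : ContDiffAt ℝ (⊤ : ℕ∞) f p) :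
    DifferentiableAt ℝ f p := hf.differentiableAt (by simp)

lemma aux_comm {n : ℕ} {f : Pt n → ℝ} {p : Pt n} (hf : ContDiffAt ℝ (⊤ : ℕ∞) f p) (v w : Pt n) :
    fderiv ℝ (fun q => fderiv ℝ f q v) p w = fderiv ℝ (fun q => fderiv ℝ f q w) p v := by
  have hd : DifferentiableAt ℝ (fderiv ℝ f) p :=
    (hf.fderiv_right (m := (⊤ : ℕ∞)) (by simp)).differentiableAt (by simp)
  have hs : IsSymmSndFDerivAt ℝ f p := hf.isSymmSndFDerivAt (by
    simp only [minSmoothness_of_isRCLikeNormedField]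
    exact WithTop.coe_le_coe.2 le_top)
  rw [fderiv_clm_apply hd (differentiableAt_const v), fderiv_clm_apply hd (differentiableAt_const w)]
  simpa using hs.eq w v

lemma aux_pdy_Sop {n : ℕ} {G : Fin n → Pt n → ℝ} {g : Pt n → ℝ} {p : Pt n}
    (hG : ∀ k, ContDiffAt ℝ (⊤ : ℕ∞) (G k) p) (hg : ContDiffAt ℝ (⊤ : ℕ∞) g p) (j : Fin n) :
    DifferentiableAt ℝ (Sop G g) p ∧
    pdy (Sop G g) j p = Sop G (pdy g j) p + pdx g j p - 2 * ∑ k, Ncoef G k j p * pdy g k p := by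
  have hx : ∀ k, HasFDerivAt (pdx g k) (fderiv ℝ (pdx g k) p) p := fun k =>
    (aux_diff (aux_smooth hg _)).hasFDerivAt
  have hy : ∀ k, HasFDerivAt (pdy g k) (fderiv ℝ (pdy g k) p) p := fun k =>
    (aux_diff (aux_smooth hg _)).hasFDerivAt
  have hG' : ∀ k, HasFDerivAt (G k) (fderiv ℝ (G k) p) p := fun k => (aux_diff (hG k)).hasFDerivAt
  have hc : ∀ k, HasFDerivAt (fun q : Pt n => q.2 k)
      ((ContinuousLinearMap.proj (R := ℝ) (φ := fun _ : Fin n => ℝ) k).comp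
        (ContinuousLinearMap.snd ℝ (Fin n → ℝ) (Fin n → ℝ))) p := fun k =>
    ((ContinuousLinearMap.proj (R := ℝ) (φ := fun _ : Fin n => ℝ) k).comp
        (ContinuousLinearMap.snd ℝ (Fin n → ℝ) (Fin n → ℝ))).hasFDerivAt
  have H := HasFDerivAt.fun_sum (u := Finset.univ) (fun k _ =>
    ((hc k).mul (hx k)).sub (((hG' k).const_mul 2).mul (hy k)))
  have H' : HasFDerivAt (Sop G g) _ p := H
  refine ⟨H'.differentiableAt, ?_⟩
  have e1 : ∀ k, fderiv ℝ (pdx g k) p (0, Pi.single j 1) = pdx (pdy g j) k p := fun k =>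
    aux_comm hg _ _
  have e2 : ∀ k, fderiv ℝ (pdy g k) p (0, Pi.single j 1) = pdy (pdy g j) k p := fun k =>
    aux_comm hg _ _
  have e3 : pdx g j p = ∑ k, pdx g k p * (Pi.single j (1:ℝ) : Fin n → ℝ) k := by
    simp [Pi.single_apply]
  rw [pdy, H'.fderiv, e3, Finset.mul_sum, Sop, ← Finset.sum_add_distrib, ← Finset.sum_sub_distrib,
    ContinuousLinearMap.sum_apply]
  refine Finset.sum_congr rfl fun k _ => ?_
  simp [e1, e2, Ncoef]
  simp only [pdy]
  ring

/-- with `ω_i = S(∂f/∂y^i) − ∂f/∂x^i`, one has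
`∂ω_i/∂y^j = ∇(∂²f/∂y^j∂y^i) + δ/δx^j(∂f/∂y^i) − δ/δx^i(∂f/∂y^j)` on `Ω`. -/
theorem statement1 {n : ℕ} (hn : 1 ≤ n) (U : Set (Fin n → ℝ)) (hU : IsOpen U)
    (G : Fin n → Pt n → ℝ) (hG : IsSpray U G)
    (f : Pt n → ℝ) (hf : ContDiffOn ℝ (⊤ : ℕ∞) f (OmegaSet U)) :
    ∀ i j, ∀ p ∈ OmegaSet U,
      pdy (EL G f i) j p
        = nablaT G (pdyy f) j i p + deltax G (pdy f i) j p - deltax G (pdy f j) i p := by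
  intro i j p hp
  have ho : OmegaSet U ∈ nhds p := (aux_open hU).mem_nhds hp
  have hf' := hf.contDiffAt ho
  obtain ⟨hd, hS⟩ := aux_pdy_Sop (fun k => (hG k).1.contDiffAt ho) (aux_smooth hf' (0, Pi.single i 1)) j
  change DifferentiableAt ℝ (Sop G (pdy f i)) p at hd
  change pdy (Sop G (pdy f i)) j p = Sop G (pdy (pdy f i) j) p + pdx (pdy f i) j p
    - 2 * ∑ k, Ncoef G k j p * pdy (pdy f i) k p at hS
  have hx : DifferentiableAt ℝ (pdx f i) p := aux_diff (aux_smooth hf' _)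
  have h1 : pdy (EL G f i) j p = pdy (Sop G (pdy f i)) j p - pdy (pdx f i) j p := by
    have : HasFDerivAt (EL G f i) _ p := hd.hasFDerivAt.sub hx.hasFDerivAt
    rw [pdy, this.fderiv]; rfl
  have h2 : pdy (pdx f i) j p = pdx (pdy f j) i p := aux_comm hf' _ _
  have h3 : ∀ k, pdy (pdy f k) j p = pdy (pdy f j) k p := fun k => aux_comm hf' _ _
  rw [h1, hS, h2]
  simp only [nablaT, deltax, pdyy, h3, Finset.sum_add_distrib]
  ring
end
end

section
/- Let G^i be a spray with coefficients N^i_j and let F̃ be a Finsler structure on U with metric tensor g̃_{ij}. Then the following are equivalent: (a) there exists a smooth, positively 1-homogeneous function P : Ω → ℝ such that S(∂F̃²/∂y^i) − ∂F̃²/∂x^i = 2P ∂F̃²/∂y^i on Ω for all i (i.e. the spray S is projectively related to F̃); (b) there exists a smooth, positively 1-homogeneous function P : Ω → ℝ such that the Levi-Civita equations hold on Ω for all i, j: ∇g̃_{ij} = 2P g̃_{ij} + (∂P/∂y^i) Σ_k g̃_{kj} y^k + (∂P/∂y^j) Σ_k g̃_{ik} y^k, where ∇g̃_{ij} = S(g̃_{ij})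 − Σ_k (N^k_i g̃_{kj} + N^k_j g̃_{ik}). -/
noncomputable section

section helpers
variable {n : ℕ} {U : Set (Fin n → ℝ)}

abbrev SmO (U : Set (Fin n → ℝ)) (f : Pt n → ℝ) : Prop :=
  ContDiffOn ℝ (⊤ : ℕ∞) f (OmegaSet U)

theorem omega_open (hU : IsOpen U) : IsOpen (OmegaSet U) := by
  have h1 : IsOpen {p : Pt n | p.1 ∈ U} := hU.preimage continuous_fst
  have h2 : IsOpen {p : Pt n | p.2 ≠ 0} := isOpen_ne_fun continuous_snd continuous_const
  exact h1.inter h2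

theorem SmO.cda (hU : IsOpen U) {f : Pt n → ℝ} (hf : SmO U f) {p : Pt n}
    (hp : p ∈ OmegaSet U) : ContDiffAt ℝ (⊤ : ℕ∞) f p :=
  hf.contDiffAt ((omega_open hU).mem_nhds hp)

theorem SmO.da (hU : IsOpen U) {f : Pt n → ℝ} (hf : SmO U f) {p : Pt n}
    (hp : p ∈ OmegaSet U) : DifferentiableAt ℝ f p :=
  (hf.cda hU hp).differentiableAt (by simp)

theorem smO_dir (hU : IsOpen U) {f : Pt n → ℝ} (hf : SmO U f) (v : Pt n) :
    SmO U (fun p => fderiv ℝ f p v) := by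
  have h : ContDiffOn ℝ (⊤ : ℕ∞) (fderiv ℝ f) (OmegaSet U) :=
    hf.fderiv_of_isOpen (omega_open hU) (by simp)
  exact h.clm_apply contDiffOn_const

theorem smO_pdx (hU : IsOpen U) {f : Pt n → ℝ} (hf : SmO U f) (i : Fin n) :
    SmO U (pdx f i) := smO_dir hU hf _

theorem smO_pdy (hU : IsOpen U) {f : Pt n → ℝ} (hf : SmO U f) (i : Fin n) :
    SmO U (pdy f i) := smO_dir hU hf _

theorem dir_comm (hU : IsOpen U) {f : Pt n → ℝ} (hf : SmO U f) (v w : Pt n) {p : Pt n}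
    (hp : p ∈ OmegaSet U) :
    fderiv ℝ (fun q => fderiv ℝ f q v) p w = fderiv ℝ (fun q => fderiv ℝ f q w) p v := by
  have hs : IsSymmSndFDerivAt ℝ f p :=
    (hf.cda hU hp).isSymmSndFDerivAt (by
      rw [minSmoothness_of_isRCLikeNormedField]
      exact WithTop.coe_le_coe.mpr (le_top : (2 : ℕ∞) ≤ ⊤))
  have hd : DifferentiableAt ℝ (fderiv ℝ f) p :=
    ((hf.cda hU hp).fderiv_right (m := 1) (by norm_cast)).differentiableAt (by simp)
  have key : ∀ a b : Pt n, fderiv ℝ (fun q => fderiv ℝ f q a) p b = fderiv ℝ (fderiv ℝ f) p b a := by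
    intro a b
    rw [fderiv_clm_apply hd (differentiableAt_const a)]
    simp
  rw [key, key]
  exact hs w v

theorem pdy_pdy_comm (hU : IsOpen U) {f : Pt n → ℝ} (hf : SmO U f) (i j : Fin n) {p : Pt n}
    (hp : p ∈ OmegaSet U) : pdy (pdy f i) j p = pdy (pdy f j) i p := dir_comm hU hf _ _ hp

theorem pdy_pdx_comm (hU : IsOpen U) {f : Pt n → ℝ} (hf : SmO U f) (i j : Fin n) {p : Pt n}
    (hp : p ∈ OmegaSet U) : pdy (pdx f i) j p = pdx (pdy f j) i p := dir_comm hU hf _ _ hp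

theorem dir_congr (hU : IsOpen U) {f g : Pt n → ℝ} (h : ∀ p ∈ OmegaSet U, f p = g p)
    {p : Pt n} (hp : p ∈ OmegaSet U) : fderiv ℝ f p = fderiv ℝ g p := by
  apply Filter.EventuallyEq.fderiv_eq
  filter_upwards [(omega_open hU).mem_nhds hp] with q hq using h q hq

theorem pdy_congr (hU : IsOpen U) {f g : Pt n → ℝ} (h : ∀ p ∈ OmegaSet U, f p = g p) (i : Fin n)
    {p : Pt n} (hp : p ∈ OmegaSet U) : pdy f i p = pdy g i p := by
  unfold pdy; rw [dir_congr hU h hp]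

theorem Sop_congr (hU : IsOpen U) (G : Fin n → Pt n → ℝ) {f g : Pt n → ℝ}
    (h : ∀ p ∈ OmegaSet U, f p = g p)
    {p : Pt n} (hp : p ∈ OmegaSet U) : Sop G f p = Sop G g p := by
  unfold Sop pdx pdy; rw [dir_congr hU h hp]

theorem smO_coord (k : Fin n) : SmO U (fun p : Pt n => p.2 k) := by
  have : ContDiff ℝ (⊤ : ℕ∞) (fun p : Pt n => p.2 k) := by fun_prop
  exact this.contDiffOn

theorem pdy_coord (k j : Fin n) (p : Pt n) :
    pdy (fun q : Pt n => q.2 k) j p = if k = j then 1 else 0 := by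
  have : HasFDerivAt (fun q : Pt n => q.2 k)
      ((ContinuousLinearMap.proj (R := ℝ) (φ := fun _ : Fin n => ℝ) k).comp (ContinuousLinearMap.snd ℝ (Fin n → ℝ) (Fin n → ℝ))) p :=
    (((ContinuousLinearMap.proj (R := ℝ) (φ := fun _ : Fin n => ℝ) k).comp (ContinuousLinearMap.snd ℝ (Fin n → ℝ) (Fin n → ℝ))).hasFDerivAt (x := p))
  unfold pdy
  rw [this.fderiv]
  simp [Pi.single_apply]

theorem pdy_mul {f g : Pt n → ℝ} {p : Pt n} (hf : DifferentiableAt ℝ f p)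
    (hg : DifferentiableAt ℝ g p) (j : Fin n) :
    pdy (fun q => f q * g q) j p = pdy f j p * g p + f p * pdy g j p := by
  unfold pdy
  rw [fderiv_fun_mul hf hg]
  simp; ring

theorem pdy_sub {f g : Pt n → ℝ} {p : Pt n} (hf : DifferentiableAt ℝ f p)
    (hg : DifferentiableAt ℝ g p) (j : Fin n) :
    pdy (fun q => f q - g q) j p = pdy f j p - pdy g j p := by
  unfold pdy
  rw [fderiv_fun_sub hf hg]
  simp

theorem pdy_sum {f : Fin n → Pt n → ℝ} {p : Pt n} (hf : ∀ k, DifferentiableAt ℝ (f k) p)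
    (j : Fin n) :
    pdy (fun q => ∑ k, f k q) j p = ∑ k, pdy (f k) j p := by
  unfold pdy
  rw [fderiv_fun_sum (fun k _ => hf k)]
  simp

theorem pdy_cmul (c : ℝ) {f : Pt n → ℝ} {p : Pt n} (hf : DifferentiableAt ℝ f p) (j : Fin n) :
    pdy (fun q => c * f q) j p = c * pdy f j p := by
  unfold pdy
  rw [fderiv_const_mul hf]
  simp

theorem Sop_cmul (G : Fin n → Pt n → ℝ) (c : ℝ) {f : Pt n → ℝ} {p : Pt n}
    (hf : DifferentiableAt ℝ f p) :
    Sop G (fun q => c * f q) p = c * Sop G f p := by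
  unfold Sop pdx pdy
  rw [fderiv_const_mul hf, Finset.mul_sum]
  refine Finset.sum_congr rfl fun k _ => ?_
  simp; ring

theorem smO_Sop (hU : IsOpen U) {G : Fin n → Pt n → ℝ} (hG : IsSpray U G) {f : Pt n → ℝ}
    (hf : SmO U f) : SmO U (Sop G f) := by
  unfold Sop
  refine ContDiffOn.sum fun k _ => ?_
  exact ((smO_coord k).mul (smO_pdx hU hf k)).sub
    ((contDiffOn_const.mul (hG k).1).mul (smO_pdy hU hf k))

theorem pdy_Sop (hU : IsOpen U) {G : Fin n → Pt n → ℝ} (hG : IsSpray U G) {f : Pt n → ℝ}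
    (hf : SmO U f) (j : Fin n) {p : Pt n} (hp : p ∈ OmegaSet U) :
    pdy (Sop G f) j p = Sop G (pdy f j) p + pdx f j p - 2 * ∑ k, Ncoef G k j p * pdy f k p := by
  have hc := fun k => (smO_coord (U := U) k).da hU hp
  have hx := fun k => (smO_pdx hU hf k).da hU hp
  have hy := fun k => (smO_pdy hU hf k).da hU hp
  have hg := fun k => SmO.da hU (hG k).1 hp
  have h2g := fun k => (hg k).const_mul 2
  have e : Sop G f = fun q => ∑ k, (q.2 k * pdx f k q - 2 * G k q * pdy f k q) := rfl
  rw [e, pdy_sum (fun k => ((hc k).fun_mul (hx k)).fun_sub ((h2g k).fun_mul (hy k)))]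
  have : ∀ k, pdy (fun q => q.2 k * pdx f k q - 2 * G k q * pdy f k q) j p
      = (p.2 k * pdx (pdy f j) k p - 2 * G k p * pdy (pdy f j) k p)
        + (if k = j then pdx f k p else 0) - 2 * (Ncoef G k j p * pdy f k p) := by
    intro k
    rw [pdy_sub ((hc k).fun_mul (hx k)) ((h2g k).fun_mul (hy k)), pdy_mul (hc k) (hx k),
      pdy_mul (h2g k) (hy k), pdy_cmul 2 (hg k), pdy_coord, pdy_pdx_comm hU hf k j hp,
      pdy_pdy_comm hU hf k j hp]
    unfold Ncoef
    split_ifs <;> ring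
  rw [Finset.sum_congr rfl fun k _ => this k, Finset.sum_sub_distrib, Finset.sum_add_distrib,
    ← Finset.mul_sum]
  simp [Sop]

theorem smO_EL (hU : IsOpen U) {G : Fin n → Pt n → ℝ} (hG : IsSpray U G) {f : Pt n → ℝ}
    (hf : SmO U f) (i : Fin n) : SmO U (EL G f i) :=
  (smO_Sop hU hG (smO_pdy hU hf i)).sub (smO_pdx hU hf i)

theorem pdy_EL (hU : IsOpen U) {G : Fin n → Pt n → ℝ} (hG : IsSpray U G) {f : Pt n → ℝ}
    (hf : SmO U f) (i j : Fin n) {p : Pt n} (hp : p ∈ OmegaSet U) :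
    pdy (EL G f i) j p = Sop G (pdy (pdy f i) j) p + pdx (pdy f i) j p
      - 2 * ∑ k, Ncoef G k j p * pdy (pdy f i) k p - pdx (pdy f j) i p := by
  have e : EL G f i = fun q => Sop G (pdy f i) q - pdx f i q := rfl
  rw [e, pdy_sub ((smO_Sop hU hG (smO_pdy hU hf i)).da hU hp) ((smO_pdx hU hf i).da hU hp),
    pdy_Sop hU hG (smO_pdy hU hf i) j hp, pdy_pdx_comm hU hf i j hp]

theorem smO_sq {F : Pt n → ℝ} (hF : SmO U F) : SmO U (fun q => F q ^ 2) := hF.pow 2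

theorem nabla_eq (hU : IsOpen U) {G : Fin n → Pt n → ℝ} (hG : IsSpray U G) {F : Pt n → ℝ}
    (hF : SmO U F) (i j : Fin n) {p : Pt n} (hp : p ∈ OmegaSet U) :
    4 * nablaT G (metricTensor F) i j p
      = pdy (EL G (fun q => F q ^ 2) i) j p + pdy (EL G (fun q => F q ^ 2) j) i p := by
  have hL := smO_sq hF
  rw [pdy_EL hU hG hL i j hp, pdy_EL hU hG hL j i hp]
  have e : metricTensor F i j = fun q => (1/2) * pdy (pdy (fun q => F q ^ 2) j) i q := rfl
  have e1 : Sop G (pdy (pdy (fun q => F q ^ 2) i) j) p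
      = Sop G (pdy (pdy (fun q => F q ^ 2) j) i) p :=
    Sop_congr hU G (fun q hq => pdy_pdy_comm hU hL i j hq) hp
  unfold nablaT
  rw [e, Sop_cmul G _ ((smO_pdy hU (smO_pdy hU hL j) i).da hU hp), e1]
  have e2 : ∑ k, (Ncoef G k i p * metricTensor F k j p + Ncoef G k j p * metricTensor F i k p)
      = (1/2) * (∑ k, Ncoef G k i p * pdy (pdy (fun q => F q ^ 2) j) k p
        + ∑ k, Ncoef G k j p * pdy (pdy (fun q => F q ^ 2) i) k p) := by
    rw [← Finset.sum_add_distrib, Finset.mul_sum]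
    refine Finset.sum_congr rfl fun k _ => ?_
    rw [pdy_pdy_comm hU hL i k hp]
    unfold metricTensor pdyy
    ring
  rw [e2]
  ring

theorem omega_smul {p : Pt n} (hp : p ∈ OmegaSet U) {c : ℝ} (hc : 0 < c) :
    ((p.1, c • p.2) : Pt n) ∈ OmegaSet U := ⟨hp.1, smul_ne_zero hc.ne' hp.2⟩

theorem dir_homog (hU : IsOpen U) {f : Pt n → ℝ} (hf : SmO U f) {k : ℤ} (h : PosHomog U k f)
    {c : ℝ} (hc : 0 < c) {p : Pt n} (hp : p ∈ OmegaSet U) (v : Pt n) :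
    fderiv ℝ f (p.1, c • p.2) (v.1, c • v.2) = c ^ k * fderiv ℝ f p v := by
  let A : Pt n →L[ℝ] Pt n := (ContinuousLinearMap.fst ℝ _ _).prod
    (c • ContinuousLinearMap.snd ℝ (Fin n → ℝ) (Fin n → ℝ))
  have h1 : fderiv ℝ (fun q => f (A q)) p = fderiv ℝ (fun q => c ^ k * f q) p :=
    dir_congr hU (fun q hq => h c hc q hq) hp
  have hA : HasFDerivAt (fun q => f (A q)) ((fderiv ℝ f (A p)).comp A) p :=
    HasFDerivAt.comp p (hf.da hU (omega_smul hp hc)).hasFDerivAt A.hasFDerivAt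
  rw [hA.fderiv, fderiv_const_mul (hf.da hU hp)] at h1
  exact DFunLike.congr_fun h1 v

theorem pdx_homog (hU : IsOpen U) {f : Pt n → ℝ} (hf : SmO U f) {k : ℤ} (h : PosHomog U k f)
    (i : Fin n) : PosHomog U k (pdx f i) := by
  intro c hc p hp
  have := dir_homog hU hf h hc hp (Pi.single i 1, 0)
  simpa [pdx] using this

theorem pdy_homog (hU : IsOpen U) {f : Pt n → ℝ} (hf : SmO U f) {k : ℤ} (h : PosHomog U k f)
    (i : Fin n) : PosHomog U (k - 1) (pdy f i) := by
  intro c hc p hp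
  have := dir_homog hU hf h hc hp (0, Pi.single i 1)
  have e : ((0, c • Pi.single i 1) : Pt n) = c • (0, Pi.single i 1) := by simp
  simp only [e, map_smul, smul_eq_mul] at this
  unfold pdy
  rw [zpow_sub_one₀ hc.ne']
  field_simp
  linarith

theorem euler (hU : IsOpen U) {f : Pt n → ℝ} (hf : SmO U f) {k : ℤ} (h : PosHomog U k f)
    {p : Pt n} (hp : p ∈ OmegaSet U) : ∑ j, p.2 j * pdy f j p = k * f p := by
  have h1 : HasDerivAt (fun c : ℝ => ((p.1, c • p.2) : Pt n)) (0, p.2) 1 := by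
    have := (hasDerivAt_id (1 : ℝ)).smul_const p.2
    simpa using (hasDerivAt_const (1 : ℝ) p.1).prodMk this
  have h2 : HasDerivAt (fun c : ℝ => f (p.1, c • p.2)) (fderiv ℝ f p (0, p.2)) 1 := by
    have hd : HasFDerivAt f (fderiv ℝ f p) ((p.1, (1:ℝ) • p.2) : Pt n) := by
      simpa using (hf.da hU hp).hasFDerivAt
    exact hd.comp_hasDerivAt (1 : ℝ) h1
  have h3 : HasDerivAt (fun c : ℝ => c ^ k * f p) (k * f p) 1 := by
    simpa using (hasDerivAt_zpow k (1 : ℝ) (Or.inl one_ne_zero)).mul_const (f p)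
  have h4 : (fun c : ℝ => f (p.1, c • p.2)) =ᶠ[nhds 1] fun c : ℝ => c ^ k * f p := by
    filter_upwards [lt_mem_nhds (zero_lt_one (α := ℝ))] with c hc using h c hc p hp
  have h5 := h2.unique (h3.congr_of_eventuallyEq h4)
  rw [← h5]
  have e : ((0, p.2) : Pt n) = ∑ j, p.2 j • ((0, Pi.single j 1) : Pt n) := by
    ext l
    · simp [Prod.fst_sum]
    · simp [Prod.snd_sum, Finset.sum_apply, Pi.single_apply]
  rw [e, map_sum]
  refine Finset.sum_congr rfl fun j _ => ?_
  rw [map_smul]; rfl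

theorem Sop_homog (hU : IsOpen U) {G : Fin n → Pt n → ℝ} (hG : IsSpray U G) {f : Pt n → ℝ}
    (hf : SmO U f) (h : PosHomog U 1 f) : PosHomog U 2 (Sop G f) := by
  intro c hc p hp
  unfold Sop
  rw [Finset.mul_sum]
  refine Finset.sum_congr rfl fun k _ => ?_
  rw [pdx_homog hU hf h k c hc p hp, pdy_homog hU hf h k c hc p hp, (hG k).2 c hc p hp]
  simp
  norm_cast
  ring

theorem EL_homog (hU : IsOpen U) {G : Fin n → Pt n → ℝ} (hG : IsSpray U G) {f : Pt n → ℝ}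
    (hf : SmO U f) (h : PosHomog U 2 f) (i : Fin n) : PosHomog U 2 (EL G f i) := by
  intro c hc p hp
  unfold EL
  rw [Sop_homog hU hG (smO_pdy hU hf i) (pdy_homog hU hf h i) c hc p hp,
    pdx_homog hU hf h i c hc p hp]
  ring

theorem sq_homog {F : Pt n → ℝ} (h : PosHomog U 1 F) : PosHomog U 2 (fun q => F q ^ 2) := by
  intro c hc p hp
  simp only [h c hc p hp]
  norm_cast
  ring

theorem half_pdy (hU : IsOpen U) {F : Pt n → ℝ} (hF : SmO U F) (h : PosHomog U 1 F) (i : Fin n)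
    {p : Pt n} (hp : p ∈ OmegaSet U) :
    pdy (fun q => F q ^ 2) i p = 2 * ∑ k, metricTensor F i k p * p.2 k ∧
    pdy (fun q => F q ^ 2) i p = 2 * ∑ k, metricTensor F k i p * p.2 k := by
  have hL := smO_sq hF
  have := euler hU (smO_pdy hU hL i) (pdy_homog hU hL (sq_homog h) i) hp
  norm_num at this
  constructor
  · rw [← this, Finset.mul_sum]
    refine Finset.sum_congr rfl fun k _ => ?_
    unfold metricTensor pdyy
    rw [pdy_pdy_comm hU hL i k hp]; ring
  · rw [← this, Finset.mul_sum]
    refine Finset.sum_congr rfl fun k _ => ?_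
    unfold metricTensor pdyy
    ring

theorem skew_zero (hU : IsOpen U) {D : Fin n → Pt n → ℝ} (hD : ∀ i, SmO U (D i))
    (hh : ∀ i, PosHomog U 2 (D i))
    (hs : ∀ i j, ∀ p ∈ OmegaSet U, pdy (D i) j p + pdy (D j) i p = 0) (i : Fin n)
    {p : Pt n} (hp : p ∈ OmegaSet U) : D i p = 0 := by
  have hE : ∀ q ∈ OmegaSet U, ∀ i, ∑ j, q.2 j * pdy (D i) j q = 2 * D i q := by
    intro q hq i
    have := euler hU (hD i) (hh i) hq
    exact_mod_cast this
  have h1 : ∀ q ∈ OmegaSet U, ∀ i, ∑ j, q.2 j * pdy (D j) i q = - (2 * D i q) := by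
    intro q hq i
    rw [← hE q hq i, ← Finset.sum_neg_distrib]
    refine Finset.sum_congr rfl fun j _ => ?_
    linear_combination q.2 j * hs i j q hq
  have h2 : ∀ q ∈ OmegaSet U, ∑ i, q.2 i * D i q = 0 := by
    intro q hq
    have a : ∑ i, q.2 i * (2 * D i q) = ∑ i, ∑ j, q.2 i * (q.2 j * pdy (D i) j q) := by
      simp only [← hE q hq, Finset.mul_sum]
    have b : ∑ i, q.2 i * (-(2 * D i q)) = ∑ i, ∑ j, q.2 i * (q.2 j * pdy (D j) i q) := by
      simp only [← h1 q hq, Finset.mul_sum]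
    rw [Finset.sum_comm] at b
    have c : ∑ i, q.2 i * (2 * D i q) = ∑ i, q.2 i * (-(2 * D i q)) := by
      rw [a, b]
      refine Finset.sum_congr rfl fun i _ => Finset.sum_congr rfl fun j _ => ?_
      ring
    have d : ∑ i, q.2 i * (2 * D i q) = 2 * ∑ i, q.2 i * D i q := by
      rw [Finset.mul_sum]; exact Finset.sum_congr rfl fun i _ => by ring
    have e : ∑ i, q.2 i * (-(2 * D i q)) = -2 * ∑ i, q.2 i * D i q := by
      rw [Finset.mul_sum]; exact Finset.sum_congr rfl fun i _ => by ring
    linarith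
  have h3 : pdy (fun q => ∑ k, q.2 k * D k q) i p = 0 := by
    rw [pdy_congr hU (g := fun _ => 0) h2 i hp]
    simp [pdy]
  have hc := fun k => (smO_coord (U := U) k).da hU hp
  have hd := fun k => (hD k).da hU hp
  rw [pdy_sum (fun k => (hc k).fun_mul (hd k)),
    Finset.sum_congr rfl fun k _ => pdy_mul (hc k) (hd k) i, Finset.sum_add_distrib,
    h1 p hp i] at h3
  simp only [pdy_coord] at h3
  simp at h3
  linarith

end helpers


/-- Theorem 2 i): `S` is projectively related to the Finsler structure `F̃`
(i.e. `δ_S F̃² = 2P d_J F̃²` for some 1-homogeneous `P`) iff the metric tensor `g̃_{ij}`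
satisfies the Levi-Civita equations for some 1-homogeneous `P`. -/
theorem statement5 {n : ℕ} (hn : 1 ≤ n) (U : Set (Fin n → ℝ)) (hU : IsOpen U)
    (G : Fin n → Pt n → ℝ) (hG : IsSpray U G)
    (Ft : Pt n → ℝ) (hFt : IsFinsler U Ft) :
    (∃ P : Pt n → ℝ, ContDiffOn ℝ (⊤ : ℕ∞) P (OmegaSet U) ∧ PosHomog U 1 P ∧
        ∀ i, ∀ p ∈ OmegaSet U,
          EL G (fun q => Ft q ^ 2) i p = 2 * P p * pdy (fun q => Ft q ^ 2) i p) ↔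
      (∃ P : Pt n → ℝ, ContDiffOn ℝ (⊤ : ℕ∞) P (OmegaSet U) ∧ PosHomog U 1 P ∧
        ∀ i j, ∀ p ∈ OmegaSet U,
          nablaT G (metricTensor Ft) i j p
            = 2 * P p * metricTensor Ft i j p
              + pdy P i p * ∑ k, metricTensor Ft k j p * p.2 k
              + pdy P j p * ∑ k, metricTensor Ft i k p * p.2 k) := by
  obtain ⟨hF, -, hF1, -⟩ := hFt
  have hL := smO_sq hF
  have hprod : ∀ P : Pt n → ℝ, SmO U P → ∀ i j, ∀ p ∈ OmegaSet U,
      pdy (fun q => 2 * P q * pdy (fun q => Ft q ^ 2) i q) j p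
        = 2 * pdy P j p * pdy (fun q => Ft q ^ 2) i p
          + 2 * P p * (2 * metricTensor Ft j i p) := by
    intro P hP i j p hp
    rw [pdy_mul ((hP.da hU hp).const_mul 2) ((smO_pdy hU hL i).da hU hp),
      pdy_cmul 2 (hP.da hU hp)]
    unfold metricTensor pdyy
    ring
  have hsymm : ∀ i j, ∀ p ∈ OmegaSet U, metricTensor Ft j i p = metricTensor Ft i j p := by
    intro i j p hp
    unfold metricTensor pdyy
    rw [pdy_pdy_comm hU hL i j hp]
  constructor
  · rintro ⟨P, hP, hP1, h⟩
    refine ⟨P, hP, hP1, fun i j p hp => ?_⟩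
    have e := nabla_eq hU hG hF i j hp
    rw [pdy_congr hU (h i) j hp, pdy_congr hU (h j) i hp, hprod P hP i j p hp,
      hprod P hP j i p hp, hsymm i j p hp, (half_pdy hU hF hF1 i hp).1,
      (half_pdy hU hF hF1 j hp).2] at e
    linarith
  · rintro ⟨P, hP, hP1, h⟩
    refine ⟨P, hP, hP1, fun i p hp => ?_⟩
    have hsm : ∀ i, SmO U (fun q => 2 * P q * pdy (fun q => Ft q ^ 2) i q) := fun i =>
      (contDiffOn_const.mul hP).mul (smO_pdy hU hL i)
    have key := skew_zero hU
      (D := fun i q => EL G (fun q => Ft q ^ 2) i q - 2 * P q * pdy (fun q => Ft q ^ 2) i q)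
      (fun i => (smO_EL hU hG hL i).sub (hsm i)) ?_ ?_ i hp
    · exact sub_eq_zero.mp key
    · intro i c hc q hq
      have h1 := EL_homog hU hG hL (sq_homog hF1) i c hc q hq
      have h2 := pdy_homog hU hL (sq_homog hF1) i c hc q hq
      have h3 := hP1 c hc q hq
      norm_num at h2 h3
      simp only [h1, h2, h3]
      norm_cast
      ring
    · intro i j q hq
      have e := nabla_eq hU hG hF i j hq
      rw [pdy_sub ((smO_EL hU hG hL i).da hU hq) ((hsm i).da hU hq),
        pdy_sub ((smO_EL hU hG hL j).da hU hq) ((hsm j).da hU hq),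
        hprod P hP i j q hq, hprod P hP j i q hq, hsymm i j q hq,
        (half_pdy hU hF hF1 i hq).1, (half_pdy hU hF hF1 j hq).2]
      rw [h i j q hq] at e
      linarith
end
end
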